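/- Let X be an implicative-orthomodular algebra and let x, y ∈ X with x ≤_Q y. Then: (i) y ∪ x = y and y* ≤_Q x*; (ii) for every z ∈ X, y→z ≤_Q x→z and z→x ≤_Q z→y. -/

import Mathlib

/-!
Everything follows from the contrapositive law `x → y = y* → x*`. The hypothesis `x ≤_Q y` unfolds to
`x* = (y → x) → y*`, and (IOM) becomes the identity `((u → v) → v) → (u → v)* = v*`. Taking `u = x*`,
`v = y*` there gives `x* → (x* → y*)* = y`, which is `y ∪ x = y`; negating it gives `y* ≤_Q x*`.
For antitonicity, `x → z = z* → x* = z* → ((y → x) → y*) = (y → x) → (y → z)`, so that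
`y → z ≤_Q x → z` is an instance of (IOM). Monotonicity in the second argument is antitonicity
applied to `y* ≤_Q x*`, by contraposition.
-/

/-- An involutive BE algebra `(X, →, 0, 1)`. -/
structure InvBE (X : Type*) where
  imp : X → X → X
  one : X
  zero : X
  imp_self : ∀ x, imp x x = one
  imp_one : ∀ x, imp x one = one
  one_imp : ∀ x, imp one x = x
  exchange : ∀ x y z, imp x (imp y z) = imp y (imp x z)
  zero_imp : ∀ x, imp zero x = one
  imp_involutive : ∀ x, imp (imp x zero) zero = x

namespace InvBE

variable {X : Type*} (A : InvBE X)

/-- `x* := x → 0`. -/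
def neg (x : X) : X := A.imp x A.zero

/-- `x ⊓ y := ((x* → y*) → y*)*`. -/
def inf (x y : X) : X := A.neg (A.imp (A.imp (A.neg x) (A.neg y)) (A.neg y))

/-- `x ∪ y := (x → y) → y`. -/
def sup (x y : X) : X := A.imp (A.imp x y) y

/-- `x ⊙ y := (x → y*)*`. -/
def odot (x y : X) : X := A.neg (A.imp x (A.neg y))

/-- `x ⊕ y := (x* ⊙ y*)*`. -/
def oplus (x y : X) : X := A.neg (A.odot (A.neg x) (A.neg y))

/-- `x ≤_Q y` iff `x = x ⊓ y`. -/
def leQ (x y : X) : Prop := x = A.inf x y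

/-- `x ≤ y` iff `x → y = 1`. -/
def le (x y : X) : Prop := A.imp x y = A.one

/-- (IOM): `x ⊓ (y → x) = x` for all `x, y`. -/
def IOM : Prop := ∀ x y, A.inf x (A.imp y x) = x

/-- (QW): `x → ((x ⊓ y) ⊓ (z ⊓ x)) = (x → y) ⊓ (x → z)` for all `x, y, z`. -/
def QW : Prop :=
  ∀ x y z, A.imp x (A.inf (A.inf x y) (A.inf z x)) = A.inf (A.imp x y) (A.imp x z)

/-- A filter: nonempty, closed under `⊙`, upward closed for `≤_Q`. -/
def IsFilter (F : Set X) : Prop :=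
  F.Nonempty ∧ (∀ x ∈ F, ∀ y ∈ F, A.odot x y ∈ F) ∧
    (∀ x ∈ F, ∀ y : X, A.leQ x y → y ∈ F)

/-- A deductive system: contains `1` and is closed under modus ponens. -/
def IsDS (F : Set X) : Prop :=
  A.one ∈ F ∧ ∀ x y : X, x ∈ F → A.imp x y ∈ F → y ∈ F

/-- `pow x n` is the `⊙`-product of `n + 1` copies of `x`, i.e. `x^(n+1)`. -/
def pow (x : X) : ℕ → X
  | 0 => x
  | n + 1 => A.odot x (pow x n)

/-- A maximal filter: proper and not contained in any other proper filter. -/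
def IsMaximalFilter (F : Set X) : Prop :=
  A.IsFilter F ∧ F ≠ Set.univ ∧
    ∀ G : Set X, A.IsFilter G → F ⊆ G → G ≠ Set.univ → G = F

/-- A strongly maximal filter: for every `x ∉ F` there is `n ≥ 1` with `(xⁿ)* ∈ F`. -/
def IsStronglyMaximalFilter (F : Set X) : Prop :=
  A.IsFilter F ∧ ∀ x : X, x ∉ F → ∃ n : ℕ, A.neg (A.pow x n) ∈ F

/-- `x ≡_F y` iff there is `f` with `x, y ≤_Q f` and `f → x, f → y ∈ F`. -/
def cong (F : Set X) (x y : X) : Prop :=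
  ∃ f : X, A.leQ x f ∧ A.leQ y f ∧ A.imp f x ∈ F ∧ A.imp f y ∈ F

end InvBE

namespace InvBE

variable {X : Type*} {A : InvBE X}

theorem neg_neg (x : X) : A.neg (A.neg x) = x := A.imp_involutive x

theorem neg_imp_neg (x y : X) : A.imp (A.neg y) (A.neg x) = A.imp x y := by
  unfold neg
  rw [A.exchange, A.imp_involutive]

theorem inf_eq (x y : X) : A.inf x y = A.neg (A.imp (A.imp y x) (A.neg y)) := by
  rw [inf, neg_imp_neg]

theorem neg_eq_of_leQ {x y : X} (h : A.leQ x y) :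
    A.neg x = A.imp (A.imp y x) (A.neg y) := by
  have h' : x = A.neg (A.imp (A.imp y x) (A.neg y)) := h.trans (inf_eq x y)
  exact (congrArg A.neg h').trans (neg_neg _)

theorem IOM.imp_neg (hA : A.IOM) (u v : X) :
    A.imp (A.imp (A.imp u v) v) (A.neg (A.imp u v)) = A.neg v := by
  rw [← neg_neg (A := A) (A.imp _ _), ← inf_eq, hA]

theorem IOM.sup_eq (hA : A.IOM) {x y : X} (h : A.leQ x y) : A.sup y x = y := by
  have h1 := hA.imp_neg (A.neg x) (A.neg y)
  rw [neg_imp_neg, ← neg_eq_of_leQ h, neg_imp_neg, neg_neg] at h1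
  exact h1

theorem IOM.neg_leQ (hA : A.IOM) {x y : X} (h : A.leQ x y) :
    A.leQ (A.neg y) (A.neg x) := by
  have h1 := hA.sup_eq h
  unfold sup at h1
  rw [leQ, inf, neg_neg, neg_neg, h1]

theorem IOM.imp_leQ_imp_left (hA : A.IOM) {x y : X} (h : A.leQ x y) (z : X) :
    A.leQ (A.imp y z) (A.imp x z) := by
  have h1 : A.imp x z = A.imp (A.imp y x) (A.imp y z) := by
    rw [← neg_imp_neg x z, neg_eq_of_leQ h, A.exchange, neg_imp_neg]
  rw [h1]
  exact (hA _ _).symm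

end InvBE

/-- In an IOM algebra, if `x ≤_Q y`, then `y ∪ x = y`, `y* ≤_Q x*`, and for all `z`,
`y → z ≤_Q x → z` and `z → x ≤_Q z → y`. -/
theorem stmt_3 {X : Type*} (A : InvBE X) (hA : A.IOM) :
    ∀ x y : X, A.leQ x y →
      A.sup y x = y ∧ A.leQ (A.neg y) (A.neg x) ∧
        ∀ z : X, A.leQ (A.imp y z) (A.imp x z) ∧ A.leQ (A.imp z x) (A.imp z y) := by
  intro x y h
  refine ⟨hA.sup_eq h, hA.neg_leQ h, fun z => ⟨hA.imp_leQ_imp_left h z, ?_⟩⟩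
  rw [← InvBE.neg_imp_neg z x, ← InvBE.neg_imp_neg z y]
  exact hA.imp_leQ_imp_left (hA.neg_leQ h) (A.neg z)
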